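/- Let p > 3 be a prime, G = A × P with A = E_9 and P = C_p, and let 𝒜 be an S-ring over G such that A is not an 𝒜-subgroup. Let C be the maximal 𝒜-subgroup of G contained in A (so |C| ∈ {1, 3}). Then one of the following holds: (1) 𝒜 = 𝒜_C ≀ 𝒜_{G/C} is the wreath product and rk(𝒜_{G/C}) = 2; (2) 𝒜 is the U/L-wreath product for some 𝒜-subgroups L ≤ U with P ≤ L < G and U = CL. -/

import Mathlib

open scoped Pointwise

/-- The element `\underline{X} = Σ_{x∈X} x` of the integral group ring `ℤG`. -/
noncomputable def grpSum {G : Type*} [Group G] [Fintype G] (X : Set G) :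
    MonoidAlgebra ℤ G :=
  ∑ x : G, X.indicator (fun g => MonoidAlgebra.single g (1 : ℤ)) x

/-- A Schur ring (S-ring) over a finite group `G`, described by its partition
into basic sets: (S1) `{1}` is a basic set, (S2) the class of basic sets is
closed under inverses, (S3) the ℤ-span of the sums `\underline{X}` is closed
under multiplication (i.e. is a subring of `ℤG`). -/
structure SchurRing (G : Type*) [Group G] [Fintype G] where
  basicSets : Set (Set G)
  nonempty_mem : ∀ X ∈ basicSets, X.Nonempty
  cover : ∀ g : G, ∃ X ∈ basicSets, g ∈ X
  disjoint' : ∀ X ∈ basicSets, ∀ Y ∈ basicSets, X ≠ Y → X ∩ Y = ∅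
  one_mem : {(1 : G)} ∈ basicSets
  inv_mem : ∀ X ∈ basicSets, X⁻¹ ∈ basicSets
  mul_mem : ∀ X ∈ basicSets, ∀ Y ∈ basicSets,
    grpSum X * grpSum Y ∈ Submodule.span ℤ (grpSum '' basicSets)

namespace SchurRing

variable {G : Type*} [Group G] [Fintype G]

/-- An `𝒜`-set: a union of basic sets. -/
def IsASet (A : SchurRing G) (S : Set G) : Prop :=
  ∃ T ⊆ A.basicSets, S = ⋃₀ T

/-- An `𝒜`-subgroup: a subgroup that is an `𝒜`-set. -/
def IsASubgroup (A : SchurRing G) (H : Subgroup G) : Prop :=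
  A.IsASet (H : Set G)

/-- `𝒜` is schurian: its basic sets are the orbits of the stabilizer of `1`
in some group `K` with `G_right ≤ K ≤ Sym(G)`. -/
def IsSchurian (A : SchurRing G) : Prop :=
  ∃ K : Subgroup (Equiv.Perm G), (∀ g : G, Equiv.mulRight g ∈ K) ∧
    A.basicSets = Set.range fun x : G =>
      MulAction.orbit (MulAction.stabilizer K (1 : G)) x

/-- `𝒜` is cyclotomic: its basic sets are the orbits of a subgroup of `Aut(G)`. -/
def IsCyclotomic (A : SchurRing G) : Prop :=
  ∃ M : Subgroup (MulAut G),
    A.basicSets = Set.range fun x : G => MulAction.orbit M x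

/-- `𝒜` is trivial: its basic sets are `{1}` and `G ∖ {1}`. -/
def IsTrivial (A : SchurRing G) : Prop :=
  A.basicSets ⊆ {{(1 : G)}, {(1 : G)}ᶜ}

/-- `𝒜 = 𝒜_H ⊗ 𝒜_K`: an internal tensor product decomposition of `𝒜`
with respect to the internal direct product `G = H × K`. -/
def IsTensorDecomp (A : SchurRing G) (H K : Subgroup G) : Prop :=
  A.IsASubgroup H ∧ A.IsASubgroup K ∧ H ⊓ K = ⊥ ∧ H ⊔ K = ⊤ ∧
  ∀ X ∈ A.basicSets, ∃ X₁ ∈ A.basicSets, ∃ X₂ ∈ A.basicSets,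
    X₁ ⊆ (H : Set G) ∧ X₂ ⊆ (K : Set G) ∧ X = X₁ * X₂

/-- `𝒜` is the `U/L`-wreath product: `U`, `L` are `𝒜`-subgroups, `L ⊴ G`,
`L ≤ U`, and `L ≤ rad(X)` for every basic set `X` outside `U`. -/
def IsWreathSection (A : SchurRing G) (U L : Subgroup G) : Prop :=
  A.IsASubgroup U ∧ A.IsASubgroup L ∧ L ≤ U ∧ L.Normal ∧
  ∀ X ∈ A.basicSets, ¬ X ⊆ (U : Set G) →
    ∀ g ∈ L, (g * ·) '' X = X ∧ (· * g) '' X = X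

end SchurRing

/-- A finite group is a Schur group if every S-ring over it is schurian. -/
def IsSchurGroup (G : Type*) [Group G] [Fintype G] : Prop :=
  ∀ A : SchurRing G, A.IsSchurian

/-- A Cayley isomorphism between S-rings: a group isomorphism mapping the
basic sets of `𝒜` onto the basic sets of `𝒜'`. -/
def IsCayleyIso {G G' : Type*} [Group G] [Fintype G] [Group G'] [Fintype G']
    (A : SchurRing G) (A' : SchurRing G') (f : G ≃* G') : Prop :=
  (fun X : Set G => ⇑f '' X) '' A.basicSets = A'.basicSets

theorem coeff_grpSum {G : Type*} [Group G] [Fintype G] (S : Set G) (g : G) :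
    (grpSum S).coeff g = S.indicator 1 g := by
  classical
  rw [grpSum, MonoidAlgebra.coeff_sum, Finsupp.finsetSum_apply, Finset.sum_eq_single g]
  · by_cases h : g ∈ S <;> simp [h]
  · intro b _ hb
    by_cases h : b ∈ S <;> simp [h, hb]
  · simp

theorem coeff_grpSum_mul_grpSum {G : Type*} [Group G] [Fintype G] (S T : Set G) (g : G) :
    (grpSum S * grpSum T).coeff g = ({s | s ∈ S ∧ s⁻¹ * g ∈ T}.ncard : ℤ) := by
  classical
  rw [MonoidAlgebra.coeff_mul_apply_left, Finsupp.sum_fintype _ _ (by simp),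
    Set.ncard_eq_toFinset_card', Set.toFinset_ofPred, Finset.card_filter, Nat.cast_sum]
  refine Finset.sum_congr rfl fun s _ => ?_
  rw [coeff_grpSum, coeff_grpSum]
  by_cases hs : s ∈ S <;> by_cases ht : s⁻¹ * g ∈ T <;> simp [hs, ht]

theorem exists_sum_pow_prime_eq {R ι : Type*} [CommSemiring R] {q : ℕ} (hq : q.Prime)
    (s : Finset ι) (f : ι → R) :
    ∃ r, (∑ i ∈ s, f i) ^ q = ∑ i ∈ s, f i ^ q + q * r := by
  classical
  induction s using Finset.induction_on with
  | empty => exact ⟨0, by simp [hq.ne_zero]⟩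
  | insert a s ha ih =>
    obtain ⟨r, hr⟩ := ih
    obtain ⟨t, ht⟩ := exists_add_pow_prime_eq hq (f a) (∑ i ∈ s, f i)
    refine ⟨r + f a * (∑ i ∈ s, f i) * t, ?_⟩
    rw [Finset.sum_insert ha, Finset.sum_insert ha, ht, hr]
    ring

namespace SchurRing

section Group

variable {G : Type*} [Group G] [Fintype G] (A : SchurRing G)

theorem eq_of_mem {X Y : Set G} (hX : X ∈ A.basicSets) (hY : Y ∈ A.basicSets) {g : G}
    (hgX : g ∈ X) (hgY : g ∈ Y) : X = Y := by
  by_contra h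
  have := A.disjoint' X hX Y hY h
  exact (this ▸ Set.mem_inter hgX hgY : g ∈ (∅ : Set G))

theorem isASet_iff {S : Set G} :
    A.IsASet S ↔ ∀ X ∈ A.basicSets, ∀ x ∈ X, x ∈ S → X ⊆ S := by
  constructor
  · rintro ⟨T, hT, rfl⟩ X hX x hx ⟨Y, hY, hxY⟩
    rw [A.eq_of_mem hX (hT hY) hx hxY]
    exact Set.subset_sUnion_of_mem hY
  · intro h
    refine ⟨{X | X ∈ A.basicSets ∧ X ⊆ S}, fun X hX => hX.1, ?_⟩
    ext g
    constructor
    · intro hg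
      obtain ⟨X, hX, hgX⟩ := A.cover g
      exact ⟨X, ⟨hX, h X hX g hgX hg⟩, hgX⟩
    · rintro ⟨X, ⟨-, hXS⟩, hgX⟩
      exact hXS hgX

variable {A}

theorem isASet_of_mem {X : Set G} (hX : X ∈ A.basicSets) : A.IsASet X :=
  ⟨{X}, by simpa using hX, by simp⟩

theorem IsASet.subset {S X : Set G} (hS : A.IsASet S) (hX : X ∈ A.basicSets) {x : G}
    (hxX : x ∈ X) (hxS : x ∈ S) : X ⊆ S :=
  A.isASet_iff.1 hS X hX x hxX hxS

theorem IsASet.union {S T : Set G} (hS : A.IsASet S) (hT : A.IsASet T) : A.IsASet (S ∪ T) :=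
  A.isASet_iff.2 fun _ hX _ hxX hx => hx.elim
    (fun h => (hS.subset hX hxX h).trans Set.subset_union_left)
    fun h => (hT.subset hX hxX h).trans Set.subset_union_right

theorem coeff_eq_of_mem_span {f : MonoidAlgebra ℤ G}
    (hf : f ∈ Submodule.span ℤ (grpSum '' A.basicSets)) {X : Set G} (hX : X ∈ A.basicSets)
    {x y : G} (hx : x ∈ X) (hy : y ∈ X) : f.coeff x = f.coeff y := by
  induction hf using Submodule.span_induction with
  | mem f hf =>
    obtain ⟨Y, hY, rfl⟩ := hf
    rw [coeff_grpSum, coeff_grpSum]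
    by_cases h : x ∈ Y
    · simp [h, A.eq_of_mem hY hX h hx ▸ hy]
    · have hy' : y ∉ Y := fun h' => h (A.eq_of_mem hX hY hy h' ▸ hx)
      simp [h, hy']
  | zero => simp
  | add f g _ _ hf hg => simp [hf, hg]
  | smul a f _ hf => simp only [MonoidAlgebra.coeff_smul_apply, hf]

theorem IsASet.grpSum_mem_span {S : Set G} (hS : A.IsASet S) :
    grpSum S ∈ Submodule.span ℤ (grpSum '' A.basicSets) := by
  classical
  obtain ⟨T, hT, rfl⟩ := hS
  have : grpSum (⋃₀ T) = ∑ X ∈ T.toFinite.toFinset, grpSum X := by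
    ext g
    rw [MonoidAlgebra.coeff_sum, Finsupp.finsetSum_apply, coeff_grpSum]
    simp_rw [coeff_grpSum]
    by_cases hg : g ∈ ⋃₀ T
    · obtain ⟨X, hX, hgX⟩ := hg
      rw [Finset.sum_eq_single X]
      · rw [Set.indicator_of_mem hgX, Set.indicator_of_mem (Set.mem_sUnion_of_mem hgX hX)]
      · intro Y hY hYX
        refine Set.indicator_of_notMem (fun hgY => hYX ?_) _
        exact A.eq_of_mem (hT (by simpa using hY)) (hT hX) hgY hgX
      · simp [hX]
    · rw [Set.indicator_of_notMem hg, Finset.sum_eq_zero]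
      intro X hX
      exact Set.indicator_of_notMem
        (fun hgX => hg (Set.mem_sUnion_of_mem hgX (by simpa using hX))) _
  rw [this]
  exact Submodule.sum_mem _ fun X hX =>
    Submodule.subset_span ⟨X, hT (by simpa using hX), rfl⟩

theorem span_mul_mem {f g : MonoidAlgebra ℤ G}
    (hf : f ∈ Submodule.span ℤ (grpSum '' A.basicSets))
    (hg : g ∈ Submodule.span ℤ (grpSum '' A.basicSets)) :
    f * g ∈ Submodule.span ℤ (grpSum '' A.basicSets) := by
  have h := Submodule.mul_mem_mul hf hg
  rw [Submodule.span_mul_span] at h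
  refine Submodule.span_le.2 ?_ h
  rintro _ ⟨_, ⟨X, hX, rfl⟩, _, ⟨Y, hY, rfl⟩, rfl⟩
  exact A.mul_mem X hX Y hY

theorem span_pow_mem {f : MonoidAlgebra ℤ G}
    (hf : f ∈ Submodule.span ℤ (grpSum '' A.basicSets)) {n : ℕ} (hn : n ≠ 0) :
    f ^ n ∈ Submodule.span ℤ (grpSum '' A.basicSets) := by
  obtain ⟨n, rfl⟩ := Nat.exists_eq_succ_of_ne_zero hn
  induction n with
  | zero => simpa using hf
  | succ n ih => exact pow_succ f (n + 1) ▸ span_mul_mem (ih (Nat.succ_ne_zero n)) hf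

theorem IsASet.ncard_eq {S T : Set G} (hS : A.IsASet S) (hT : A.IsASet T) {X : Set G}
    (hX : X ∈ A.basicSets) {x y : G} (hx : x ∈ X) (hy : y ∈ X) :
    {s | s ∈ S ∧ s⁻¹ * x ∈ T}.ncard = {s | s ∈ S ∧ s⁻¹ * y ∈ T}.ncard := by
  have h := coeff_eq_of_mem_span (span_mul_mem hS.grpSum_mem_span hT.grpSum_mem_span) hX hx hy
  rw [coeff_grpSum_mul_grpSum, coeff_grpSum_mul_grpSum] at h
  exact_mod_cast h

theorem IsASet.mul {S T : Set G} (hS : A.IsASet S) (hT : A.IsASet T) : A.IsASet (S * T) := by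
  have key : ∀ g, g ∈ S * T ↔ {s | s ∈ S ∧ s⁻¹ * g ∈ T}.ncard ≠ 0 := by
    intro g
    rw [Ne, Set.ncard_eq_zero, ← Ne, ← Set.nonempty_iff_ne_empty]
    constructor
    · rintro ⟨s, hs, t, ht, rfl⟩
      exact ⟨s, hs, by simpa using ht⟩
    · rintro ⟨s, hs, ht⟩
      exact ⟨s, hs, _, ht, by simp⟩
  refine A.isASet_iff.2 fun X hX x hxX hx y hyX => ?_
  rw [key] at hx ⊢
  rwa [← hS.ncard_eq hT hX hxX hyX]

theorem isASubgroup_closure {S : Set G} (hS : A.IsASet S) :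
    A.IsASubgroup (Subgroup.closure S) := by
  refine A.isASet_iff.2 fun X hX x hxX hx => ?_
  induction hx using Subgroup.closure_induction generalizing X with
  | mem x hx => exact (hS.subset hX hxX hx).trans Subgroup.subset_closure
  | one =>
    rw [A.eq_of_mem hX A.one_mem hxX rfl]
    simp
  | mul x y _ _ ihx ihy =>
    obtain ⟨Y, hY, hxY⟩ := A.cover x
    obtain ⟨Z, hZ, hyZ⟩ := A.cover y
    refine (((isASet_of_mem hY).mul (isASet_of_mem hZ)).subset hX hxX
      (Set.mul_mem_mul hxY hyZ)).trans ?_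
    rintro _ ⟨y, hy, z, hz, rfl⟩
    exact Subgroup.mul_mem _ (ihx Y hY hxY hy) (ihy Z hZ hyZ hz)
  | inv x _ ih =>
    intro y hy
    have := ih X⁻¹ (A.inv_mem X hX) hxX (show y⁻¹ ∈ X⁻¹ by simpa using hy)
    simpa using this

theorem isASubgroup_sInf {F : Set (Subgroup G)} (hF : ∀ H ∈ F, A.IsASubgroup H) :
    A.IsASubgroup (sInf F) := by
  refine A.isASet_iff.2 fun X hX x hxX hx y hy => ?_
  simp only [SetLike.mem_coe, Subgroup.mem_sInf] at hx ⊢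
  exact fun H hH => (hF H hH).subset hX hxX (hx H hH) hy

/-- The stabilizer of a basic set under left translation is an `𝒜`-subgroup. -/
theorem isASubgroup_stabilizer {X : Set G} (hX : X ∈ A.basicSets) :
    A.IsASubgroup (MulAction.stabilizer G X) := by
  have key : ∀ g, g ∈ MulAction.stabilizer G X ↔
      {s | s ∈ X ∧ s⁻¹ * g ∈ X⁻¹}.ncard = X.ncard := by
    intro g
    have hset : {s | s ∈ X ∧ s⁻¹ * g ∈ X⁻¹} = X ∩ g • X := by
      ext s
      simp [Set.mem_smul_set_iff_inv_smul_mem]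
    have hcard : (g • X).ncard = X.ncard := Set.ncard_smul_set g X
    rw [hset, MulAction.mem_stabilizer_iff]
    constructor
    · intro h
      rw [h, Set.inter_self]
    · intro h
      have h₁ := Set.eq_of_subset_of_ncard_le Set.inter_subset_left h.ge
      exact (Set.eq_of_subset_of_ncard_le (Set.inter_eq_left.1 h₁) hcard.le).symm
  refine A.isASet_iff.2 fun Y hY x hxY hx y hyY => ?_
  rw [SetLike.mem_coe, key] at hx ⊢
  rw [← (isASet_of_mem hX).ncard_eq (isASet_of_mem (A.inv_mem X hX)) hY hxY hyY, hx]

end Group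

section CommGroup

variable {G : Type*} [CommGroup G] [Fintype G] {A : SchurRing G}

theorem IsASubgroup.sup {H K : Subgroup G} (hH : A.IsASubgroup H) (hK : A.IsASubgroup K) :
    A.IsASubgroup (H ⊔ K) := by
  rw [IsASubgroup, Subgroup.mul_normal]
  exact IsASet.mul hH hK

theorem exists_coeff_grpSum_pow_prime {q : ℕ} (hq : q.Prime) (S : Set G) (y : G) :
    ∃ r : ℤ, (grpSum S ^ q).coeff y = ({s | s ∈ S ∧ s ^ q = y}.ncard : ℤ) + q * r := by
  classical
  have hsum : grpSum S = ∑ s ∈ S.toFinset, MonoidAlgebra.single s (1 : ℤ) := by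
    ext g
    rw [MonoidAlgebra.coeff_sum, Finsupp.finsetSum_apply, coeff_grpSum]
    by_cases h : g ∈ S <;> simp [h, Finsupp.single_apply]
  obtain ⟨r, hr⟩ := exists_sum_pow_prime_eq hq S.toFinset
    fun s => MonoidAlgebra.single s (1 : ℤ)
  refine ⟨r.coeff y, ?_⟩
  rw [hsum, hr, ← nsmul_eq_mul, Set.ncard_eq_toFinset_card']
  simp only [MonoidAlgebra.coeff_add, MonoidAlgebra.coeff_smul, MonoidAlgebra.coeff_sum,
    Finsupp.add_apply, Finsupp.smul_apply, Finsupp.finsetSum_apply, MonoidAlgebra.single_pow,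
    MonoidAlgebra.coeff_single, Finsupp.single_apply, one_pow]
  rw [Finset.sum_boole, nsmul_eq_mul]
  congr 3
  ext s
  simp

theorem IsASet.not_dvd_ncard_pow {S : Set G} (hS : A.IsASet S) {q : ℕ} (hq : q.Prime) :
    A.IsASet {y | ¬ q ∣ {s | s ∈ S ∧ s ^ q = y}.ncard} := by
  have key : ∀ y, q ∣ {s | s ∈ S ∧ s ^ q = y}.ncard ↔ (q : ℤ) ∣ (grpSum S ^ q).coeff y := by
    intro y
    obtain ⟨r, hr⟩ := exists_coeff_grpSum_pow_prime hq S y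
    rw [hr, dvd_add_left (dvd_mul_right _ _), Int.natCast_dvd_natCast]
  refine A.isASet_iff.2 fun X hX x hxX hx y hyX => ?_
  rw [Set.mem_ofPred_eq, key] at hx ⊢
  rwa [← coeff_eq_of_mem_span (span_pow_mem hS.grpSum_mem_span hq.ne_zero) hX hxX hyX]

theorem IsASet.image_pow {m : ℕ} (hm : (Nat.card G).Coprime m) {S : Set G} (hS : A.IsASet S) :
    A.IsASet ((· ^ m) '' S) := by
  induction m using Nat.recOnMul generalizing S with
  | zero =>
    have : Subsingleton G := (Nat.card_eq_one_iff_unique.1 (by simpa using hm)).1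
    have : ((· ^ 0) '' S : Set G) = S := by
      convert Set.image_id S using 2
    rwa [this]
  | one => simpa using hS
  | prime q hq =>
    convert hS.not_dvd_ncard_pow hq using 1
    ext y
    constructor
    · rintro ⟨s, hs, rfl⟩
      have : {t | t ∈ S ∧ t ^ q = s ^ q} = {s} := by
        ext t
        constructor
        · exact fun h => (powCoprime hm).injective h.2
        · rintro rfl
          exact ⟨hs, rfl⟩
      simp [this, hq.one_lt.ne']
    · intro hy
      by_contra h
      have : {s | s ∈ S ∧ s ^ q = y} = ∅ :=
        Set.eq_empty_of_forall_notMem fun s hs => h ⟨s, hs.1, hs.2⟩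
      simp [this] at hy
  | mul a b ha hb =>
    have := hb (Nat.Coprime.coprime_mul_left_right hm)
      (ha (Nat.Coprime.coprime_mul_right_right hm) hS)
    rw [Set.image_image] at this
    simpa [pow_mul] using this

end CommGroup

theorem prod_top_le_stabilizer {N P : Type*} [CommGroup N] [CommGroup P] {X : Set (N × P)}
    (hX : ∀ a u, (a, u) ∈ X → ∀ v, (a, v) ∈ X) :
    (⊥ : Subgroup N).prod (⊤ : Subgroup P) ≤ MulAction.stabilizer (N × P) X := by
  rintro ⟨n, u⟩ hn
  obtain rfl : n = 1 := by simpa [Subgroup.mem_prod] using hn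
  rw [MulAction.mem_stabilizer_iff]
  ext ⟨a, v⟩
  rw [Set.mem_smul_set_iff_inv_smul_mem]
  simp only [Prod.inv_mk, inv_one, smul_eq_mul, Prod.mk_mul_mk, one_mul]
  exact ⟨fun h => hX _ _ h _, fun h => hX _ _ h _⟩

section Prod

variable {N P : Type*} [CommGroup N] [Fintype N] [CommGroup P] [Fintype P]
  {A : SchurRing (N × P)} {C : Subgroup (N × P)}

/-- A basic set meeting a coset of `1 × P` whose `N`-part lies outside `C` contains that coset. -/
theorem mk_mem_of_mem {X : Set (N × P)} (hX : X ∈ A.basicSets) (hP : (Nat.card P).Prime)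
    (hNP : (Nat.card N).Coprime (Nat.card P))
    (hCmax : ∀ C', A.IsASubgroup C' → C' ≤ (⊤ : Subgroup N).prod (⊥ : Subgroup P) → C' ≤ C)
    {a : N} {u : P} (hau : (a, u) ∈ X) (ha : (a, (1 : P)) ∉ C) (v : P) : (a, v) ∈ X := by
  set p := Nat.card P with hp
  have hpow : ∀ w : P, w ^ p = 1 := fun w => pow_card_eq_one'
  have hT := (isASet_of_mem hX).not_dvd_ncard_pow hP
  have hTC := hCmax _ (isASubgroup_closure hT) <| (Subgroup.closure_le _).2 fun y hy => by
    have hne : {s | s ∈ X ∧ s ^ p = y} ≠ ∅ := by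
      intro h
      simp [h] at hy
    obtain ⟨s, -, rfl⟩ := Set.nonempty_iff_ne_empty.2 hne
    simp [Subgroup.mem_prod, hpow]
  have hinj : Function.Injective (fun x : N => x ^ p) := (powCoprime hNP).injective
  have hset : {s | s ∈ X ∧ s ^ p = (a ^ p, (1 : P))} = (fun w => (a, w)) '' {w | (a, w) ∈ X} := by
    ext ⟨b, w⟩
    simp only [Set.mem_ofPred_eq, Prod.pow_mk, hpow, Prod.mk.injEq, and_true, Set.mem_image]
    constructor
    · rintro ⟨h, hb⟩
      obtain rfl := hinj hb
      exact ⟨w, h, rfl, rfl⟩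
    · rintro ⟨w, h, rfl, rfl⟩
      exact ⟨h, rfl⟩
  have hdvd : p ∣ {w | (a, w) ∈ X}.ncard := by
    by_contra h
    refine ha ?_
    have hmem : (a ^ p, (1 : P)) ∈ C := hTC <| Subgroup.subset_closure <| by
      rwa [Set.mem_ofPred_eq, hset,
        Set.ncard_image_of_injective _ (Prod.mk_right_injective a)]
    obtain ⟨m, hm⟩ := exists_pow_eq_self_of_coprime
      (x := a) (n := p) (hNP.symm.coprime_dvd_right (orderOf_dvd_natCard a))
    have := C.pow_mem hmem m
    rwa [Prod.pow_mk, one_pow, hm] at this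
  have huniv : {w | (a, w) ∈ X} = Set.univ := by
    refine Set.eq_of_subset_of_ncard_le (Set.subset_univ _) ?_
    rw [Set.ncard_univ]
    exact Nat.le_of_dvd ((Set.ncard_pos).2 ⟨u, hau⟩) hdvd
  exact (huniv ▸ Set.mem_univ v : v ∈ {w | (a, w) ∈ X})

theorem mk_mem_of_mk_one_mem {X : Set (N × P)} (hX : X ∈ A.basicSets)
    (hP : (Nat.card P).Prime) (hNP : (Nat.card N).Coprime (Nat.card P)) {a c : N} {v w : P}
    (ha : (a, (1 : P)) ∈ X) (hcv : (c, v) ∈ X) (hv : v ≠ 1) (hw : w ≠ 1) : (c, w) ∈ X := by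
  have : Fact (Nat.card P).Prime := ⟨hP⟩
  obtain ⟨k, hk⟩ := mem_powers_of_prime_card (g := w) (g' := v) rfl hw
  have hk : w ^ k = v := hk
  have hkP : (Nat.card P).Coprime k := by
    refine hP.coprime_iff_not_dvd.2 fun hdvd => hv ?_
    rw [← hk]
    exact orderOf_dvd_iff_pow_eq_one.1 ((orderOf_dvd_natCard w).trans hdvd)
  obtain ⟨m, hmN, hmP⟩ := Nat.chineseRemainder hNP 1 k
  have hm : (Nat.card (N × P)).Coprime m := by
    rw [Nat.card_prod]
    refine Nat.Coprime.mul_left ?_ ?_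
    · rw [Nat.coprime_iff_gcd_eq_one, Nat.gcd_comm, hmN.gcd_eq]
      simp
    · rw [Nat.coprime_iff_gcd_eq_one, Nat.gcd_comm, hmP.gcd_eq, Nat.gcd_comm]
      exact hkP
  have hN : ∀ x : N, x ^ m = x := fun x => by
    conv_rhs => rw [← pow_one x]
    exact pow_eq_pow_iff_modEq.2 (hmN.of_dvd (orderOf_dvd_natCard x))
  have hw' : w ^ m = v := by
    rw [← hk]
    exact pow_eq_pow_iff_modEq.2 (hmP.of_dvd (orderOf_dvd_natCard w))
  have hsub := ((isASet_of_mem hX).image_pow hm).subset hX ha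
    ⟨(a, 1), ha, by simp [hN]⟩
  obtain ⟨z, hz, hzv⟩ := hsub hcv
  have hzw : z = (c, w) := (powCoprime hm).injective <| by
    simpa [powCoprime_apply, hN, hw'] using hzv
  exact hzw ▸ hz

theorem exists_mem_of_notMem (hP : (Nat.card P).Prime)
    (hNP : (Nat.card N).Coprime (Nat.card P)) (hC : A.IsASubgroup C)
    (hCmax : ∀ C', A.IsASubgroup C' → C' ≤ (⊤ : Subgroup N).prod (⊥ : Subgroup P) → C' ≤ C)
    (hgen : ∀ H, A.IsASubgroup H → (⊥ : Subgroup N).prod (⊤ : Subgroup P) ≤ H → H = ⊤)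
    {X : Set (N × P)} (hX : X ∈ A.basicSets) {x : N × P} (hx : x ∈ X) (hxC : x ∉ C) :
    ∃ c v, (c, v) ∈ X ∧ v ≠ 1 ∧ (c, (1 : P)) ∈ C := by
  by_contra! h
  have hdisj : ∀ y ∈ X, y ∉ C := fun y hy hyC => hxC (hC.subset hX hy hyC hx)
  have hfull : ∀ a u, (a, u) ∈ X → ∀ v, (a, v) ∈ X := by
    intro a u hau
    refine mk_mem_of_mem hX hP hNP hCmax hau fun ha => ?_
    rcases eq_or_ne u 1 with rfl | hu
    · exact hdisj _ hau ha
    · exact h a u hau hu ha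
  have hstab := hgen _ (isASubgroup_stabilizer hX) (prod_top_le_stabilizer hfull)
  have hx1 : x⁻¹ ∈ MulAction.stabilizer (N × P) X := hstab ▸ Subgroup.mem_top _
  rw [MulAction.mem_stabilizer_iff] at hx1
  have : (1 : N × P) ∈ X := by
    rw [← hx1, Set.mem_smul_set_iff_inv_smul_mem]
    simpa using hx
  exact hdisj 1 this C.one_mem

/-- If no proper `𝒜`-subgroup contains `1 × P`, then `𝒜_{G/C}` has rank two and every basic set
outside `C` meets `N × 1`. -/
theorem mul_eq_compl_and_exists_mem (hP : (Nat.card P).Prime)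
    (hNP : (Nat.card N).Coprime (Nat.card P)) (hC : A.IsASubgroup C)
    (hCle : C ≤ (⊤ : Subgroup N).prod (⊥ : Subgroup P))
    (hCmax : ∀ C', A.IsASubgroup C' → C' ≤ (⊤ : Subgroup N).prod (⊥ : Subgroup P) → C' ≤ C)
    (hgen : ∀ H, A.IsASubgroup H → (⊥ : Subgroup N).prod (⊤ : Subgroup P) ≤ H → H = ⊤)
    {a₀ : N} (ha₀ : (a₀, (1 : P)) ∉ C)
    {Y : Set (N × P)} (hY : Y ∈ A.basicSets) {y : N × P} (hy : y ∈ Y) (hyC : y ∉ C) :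
    (C : Set (N × P)) * Y = (C : Set (N × P))ᶜ ∧ ∃ a, (a, (1 : P)) ∈ Y ∧ (a, (1 : P)) ∉ C := by
  have key : ∀ X ∈ A.basicSets, ∀ a, (a, (1 : P)) ∈ X → (a, (1 : P)) ∉ C →
      (C : Set (N × P)) * X = (C : Set (N × P))ᶜ := by
    intro X hX a haX haC
    ext z
    constructor
    · rintro ⟨c, hc, x, hx, rfl⟩ hz
      exact haC (hC.subset hX hx ((C.mul_mem_cancel_left hc).1 hz) haX)
    · intro hz
      obtain ⟨Z, hZ, hzZ⟩ := A.cover z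
      obtain ⟨c', w, hwZ, hw, hc'⟩ := exists_mem_of_notMem hP hNP hC hCmax hgen hZ hzZ hz
      obtain ⟨c, v, hvX, hv, hc⟩ := exists_mem_of_notMem hP hNP hC hCmax hgen hX haX haC
      have hwX := mk_mem_of_mk_one_mem hX hP hNP haX hvX hv hw
      refine (IsASet.mul hC (isASet_of_mem hX)).subset hZ hwZ ?_ hzZ
      exact ⟨_, C.mul_mem hc' (C.inv_mem hc), _, hwX, by simp⟩
  have hex : ∃ a, (a, (1 : P)) ∈ Y ∧ (a, (1 : P)) ∉ C := by
    obtain ⟨X, hX, haX⟩ := A.cover (a₀, (1 : P))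
    have hyX : y ∈ (C : Set (N × P)) * X := by
      rw [key X hX a₀ haX ha₀]
      exact hyC
    obtain ⟨c, hc, x, hx, rfl⟩ := hyX
    have hsub := (IsASet.mul hC (isASet_of_mem hY)).subset hX hx
      ⟨c⁻¹, C.inv_mem hc, _, hy, by simp⟩
    obtain ⟨d, hd, z, hz, hdz⟩ := hsub haX
    have hd2 : d.2 = 1 := by simpa [Subgroup.mem_prod] using hCle hd
    have hz2 : z = (z.1, 1) := Prod.ext rfl (by simpa [hd2] using congrArg Prod.snd hdz)
    refine ⟨z.1, hz2 ▸ hz, fun hzC => ha₀ ?_⟩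
    rw [← hdz]
    exact C.mul_mem hd (hz2 ▸ hzC)
  obtain ⟨a, haY, haC⟩ := hex
  exact ⟨key Y hY a haY haC, a, haY, haC⟩

end Prod

section ElementaryAbelian

set_option synthInstance.maxSize 1000 in
theorem exists_eq_pow_mul_pow (b c n : Multiplicative (ZMod 3 × ZMod 3)) (hc : c ≠ 1)
    (hb : b ≠ 1) (hbc : b ≠ c) (hbc' : b ≠ c⁻¹) : ∃ i j : ℕ, n = b ^ i * c ^ j := by
  have key : ∀ b c n : ZMod 3 × ZMod 3, c ≠ 0 → b ≠ 0 → b ≠ c → b ≠ -c →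
      ∃ i j : Fin 3, n = (i : ℕ) • b + (j : ℕ) • c := by
    decide +kernel
  obtain ⟨i, j, h⟩ := key b.toAdd c.toAdd n.toAdd hc hb hbc hbc'
  exact ⟨i, j, h⟩

theorem pow_eq_one_or (b : Multiplicative (ZMod 3 × ZMod 3)) (i : ℤ) :
    b ^ i = 1 ∨ b ^ i = b ∨ b ^ i = b⁻¹ := by
  have hb : b ^ (3 : ℤ) = 1 := by
    revert b
    change ∀ b : ZMod 3 × ZMod 3, (3 : ℤ) • b = 0
    decide
  rw [← Int.emod_add_mul_ediv i 3, zpow_add, zpow_mul, hb, one_zpow, mul_one]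
  have h₀ := Int.emod_nonneg i (by norm_num : (3 : ℤ) ≠ 0)
  have h₁ := Int.emod_lt_of_pos i (by norm_num : (0 : ℤ) < 3)
  interval_cases i % 3
  · simp
  · simp
  · refine Or.inr (Or.inr (eq_inv_of_mul_eq_one_left ?_))
    rwa [← zpow_add_one]

variable {P : Type*} [CommGroup P] [Fintype P]
  {A : SchurRing (Multiplicative (ZMod 3 × ZMod 3) × P)}
  {C : Subgroup (Multiplicative (ZMod 3 × ZMod 3) × P)}

theorem compl_mem_basicSets (hP : (Nat.card P).Prime)
    (hNP : (Nat.card (Multiplicative (ZMod 3 × ZMod 3))).Coprime (Nat.card P))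
    (hC : A.IsASubgroup C) (hCle : C ≤ (⊤ : Subgroup _).prod (⊥ : Subgroup P))
    (hCmax : ∀ C', A.IsASubgroup C' → C' ≤ (⊤ : Subgroup _).prod (⊥ : Subgroup P) → C' ≤ C)
    (hgen : ∀ H, A.IsASubgroup H → (⊥ : Subgroup _).prod (⊤ : Subgroup P) ≤ H → H = ⊤)
    {a₀ : Multiplicative (ZMod 3 × ZMod 3)} (ha₀ : (a₀, (1 : P)) ∉ C) :
    (C : Set (Multiplicative (ZMod 3 × ZMod 3) × P))ᶜ ∈ A.basicSets := by
  have hsnd : ∀ s ∈ C, s = (s.1, 1) := fun s hs =>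
    Prod.ext rfl (by simpa [Subgroup.mem_prod] using hCle hs)
  have : Nontrivial P := Finite.one_lt_card_iff_nontrivial.1 hP.one_lt
  obtain ⟨u, hu⟩ := exists_ne (1 : P)
  obtain ⟨Y, hY, huY⟩ := A.cover (1, u)
  have huC : ((1, u) : _ × P) ∉ C := fun h => hu (congrArg Prod.snd (hsnd _ h))
  obtain ⟨hCY, b, hbY, hbC⟩ :=
    mul_eq_compl_and_exists_mem hP hNP hC hCle hCmax hgen ha₀ hY huY huC
  have hrat : ∀ c v w, (c, v) ∈ Y → v ≠ 1 → w ≠ 1 → (c, w) ∈ Y := fun c v w =>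
    mk_mem_of_mk_one_mem hY hP hNP hbY
  have hinv : Y⁻¹ = Y := A.eq_of_mem (A.inv_mem Y hY) hY (g := (1, u)) (by
    simpa using hrat 1 u u⁻¹ huY hu (inv_ne_one.2 hu)) huY
  have hinv' : ∀ c, (c, u) ∈ Y → (c⁻¹, u) ∈ Y := fun c hc => by
    rw [← hinv]
    simpa using hrat c u u⁻¹ hc hu (inv_ne_one.2 hu)
  have hYC : ∀ y ∈ Y, y ∉ C := fun y hy hyC => huC (hC.subset hY hy hyC huY)
  have hcount : ∀ y ∈ Y, {s | s ∈ (C : Set _) ∧ s⁻¹ * y ∈ Y}.ncard =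
      {s | s ∈ (C : Set _) ∧ s⁻¹ * (1, u) ∈ Y}.ncard := fun y hy =>
    IsASet.ncard_eq hC (isASet_of_mem hY) hY hy huY
  suffices h : (C : Set _) * Y ⊆ Y by
    rw [← hCY, h.antisymm fun y hy => ⟨1, C.one_mem, y, hy, one_mul y⟩]
    exact hY
  by_cases hfull : ∀ s ∈ C, s⁻¹ * (1, u) ∈ Y
  · rintro _ ⟨s, hs, y, hy, rfl⟩
    have hle : {s | s ∈ (C : Set _) ∧ s⁻¹ * y ∈ Y} = C := by
      refine Set.eq_of_subset_of_ncard_le (fun s hs => hs.1) ?_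
      rw [hcount y hy]
      exact Set.ncard_le_ncard fun s hs => ⟨hs, hfull s hs⟩
    have hs' := hle.ge (C.inv_mem hs)
    simpa using hs'.2
  exfalso
  push Not at hfull
  obtain ⟨s, hsC, hsY⟩ := hfull
  obtain ⟨c, rfl⟩ : ∃ c, s = (c, 1) := ⟨_, hsnd s hsC⟩
  have hcY : (c⁻¹, u) ∉ Y := by simpa using hsY
  have hcY' : (c, u) ∉ Y := fun h => hcY (hinv' c h)
  have hc1 : c ≠ 1 := by
    rintro rfl
    exact hcY' huY
  have hgenC : ∀ d, (d, (1 : P)) ∈ C → d ≠ 1 → d = c ∨ d = c⁻¹ := by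
    intro d hd hd1
    by_contra! h
    obtain ⟨i, j, hij⟩ := exists_eq_pow_mul_pow d c b hc1 hd1 h.1 h.2
    refine hbC ?_
    have := C.mul_mem (C.pow_mem hd i) (C.pow_mem hsC j)
    simpa [hij] using this
  have hone : {s | s ∈ (C : Set _) ∧ s⁻¹ * (1, u) ∈ Y} = {1} := by
    ext s
    constructor
    · rintro ⟨hs, hdY⟩
      obtain ⟨d, rfl⟩ : ∃ d, s = (d, 1) := ⟨_, hsnd s hs⟩
      by_contra h1
      have hd1 : d ≠ 1 := by
        rintro rfl
        exact h1 rfl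
      rcases hgenC d hs hd1 with rfl | rfl
      · exact hcY (by simpa using hdY)
      · exact hcY' (by simpa using hdY)
    · rintro rfl
      exact ⟨C.one_mem, by simpa using huY⟩
  have huniq : ∀ y ∈ Y, ∀ s ∈ C, s⁻¹ * y ∈ Y → s = 1 := by
    intro y hy s hs hsy
    have h := hcount y hy
    rw [hone, Set.ncard_singleton, Set.ncard_eq_one] at h
    obtain ⟨t, ht⟩ := h
    have h1 : (1 : _ × P) ∈ {s | s ∈ (C : Set _) ∧ s⁻¹ * y ∈ Y} := ⟨C.one_mem, by simpa using hy⟩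
    have h2 : s ∈ {s | s ∈ (C : Set _) ∧ s⁻¹ * y ∈ Y} := ⟨hs, hsy⟩
    rw [ht] at h1 h2
    exact h2.trans h1.symm
  have hbC' : (b⁻¹, (1 : P)) ∉ C := fun h => hbC (by simpa using C.inv_mem h)
  have hbY' : (b⁻¹, (1 : P)) ∈ Y := by
    rw [← hinv]
    simpa using hbY
  have hKY : ∀ k ∈ (Subgroup.zpowers b).prod (⊤ : Subgroup P), k ∈ Y ∨ k = 1 := by
    rintro ⟨k, v⟩ hk
    obtain ⟨⟨i, hi⟩, -⟩ := Subgroup.mem_prod.1 hk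
    have hi : b ^ i = k := hi
    rcases pow_eq_one_or b i with h | h | h <;> rw [hi] at h <;> rw [h]
    · rcases eq_or_ne v 1 with rfl | hv
      · exact Or.inr rfl
      · exact Or.inl (hrat 1 u v huY hu hv)
    · exact Or.inl (mk_mem_of_mem hY hP hNP hCmax hbY hbC v)
    · exact Or.inl (mk_mem_of_mem hY hP hNP hCmax hbY' hbC' v)
  have hYK : ∀ y ∈ Y, y ∈ (Subgroup.zpowers b).prod (⊤ : Subgroup P) := by
    rintro ⟨n, v⟩ hy
    have hb1 : b ≠ 1 := by
      rintro rfl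
      exact hbC C.one_mem
    have hbc : b ≠ c := by
      rintro rfl
      exact hbC hsC
    have hbc' : b ≠ c⁻¹ := by
      rintro rfl
      exact hbC (by simpa using C.inv_mem hsC)
    obtain ⟨i, j, rfl⟩ := exists_eq_pow_mul_pow b c n hc1 hb1 hbc hbc'
    have hcj : (c ^ j, (1 : P)) ∈ C := by simpa using C.pow_mem hsC j
    have hK : (b ^ i, v) ∈ (Subgroup.zpowers b).prod (⊤ : Subgroup P) :=
      Subgroup.mem_prod.2 ⟨Subgroup.npow_mem_zpowers b i, Subgroup.mem_top _⟩
    have heq : (c ^ j, (1 : P))⁻¹ * (b ^ i * c ^ j, v) = (b ^ i, v) := by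
      ext <;> simp
    rcases hKY _ hK with h | h
    · have h1 := huniq _ hy _ hcj (heq ▸ h)
      rw [h1, inv_one, one_mul] at heq
      exact heq ▸ hK
    · rw [h, inv_mul_eq_one] at heq
      exact absurd (heq ▸ hcj) (hYC _ hy)
  have hKset : ((Subgroup.zpowers b).prod (⊤ : Subgroup P) : Set (_ × P)) = Y ∪ {1} := by
    ext k
    constructor
    · exact hKY k
    · rintro (h | rfl)
      · exact hYK k h
      · exact Subgroup.one_mem _
  have hKtop := hgen ((Subgroup.zpowers b).prod ⊤) (by
    rw [IsASubgroup, hKset]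
    exact (isASet_of_mem hY).union (isASet_of_mem A.one_mem))
    (Subgroup.prod_mono bot_le le_rfl)
  rcases hKY (c, 1) (hKtop ▸ Subgroup.mem_top _) with h | h
  · exact hYC _ h hsC
  · exact hc1 (congrArg Prod.fst h)

end ElementaryAbelian

end SchurRing

theorem non_dense_sring_dichotomy (p : ℕ) [Fact p.Prime] (hp : 3 < p)
    (A : SchurRing (Multiplicative (ZMod 3 × ZMod 3) × Multiplicative (ZMod p)))
    -- the Sylow 3-subgroup E₉ × 1 is not an 𝒜-subgroup
    (hA : ¬ A.IsASubgroup ((⊤ : Subgroup (Multiplicative (ZMod 3 × ZMod 3))).prod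
            (⊥ : Subgroup (Multiplicative (ZMod p)))))
    -- C is the maximal 𝒜-subgroup contained in E₉ × 1
    (C : Subgroup (Multiplicative (ZMod 3 × ZMod 3) × Multiplicative (ZMod p)))
    (hC : A.IsASubgroup C)
    (hCle : C ≤ (⊤ : Subgroup (Multiplicative (ZMod 3 × ZMod 3))).prod
            (⊥ : Subgroup (Multiplicative (ZMod p))))
    (hCmax : ∀ C', A.IsASubgroup C' →
      C' ≤ (⊤ : Subgroup (Multiplicative (ZMod 3 × ZMod 3))).prod
            (⊥ : Subgroup (Multiplicative (ZMod p))) → C' ≤ C) :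
    -- (1) 𝒜 = 𝒜_C ≀ 𝒜_{G/C} with rk(𝒜_{G/C}) = 2
    (A.IsWreathSection C C ∧
      (C : Set (Multiplicative (ZMod 3 × ZMod 3) × Multiplicative (ZMod p)))ᶜ ∈ A.basicSets) ∨
    -- (2) 𝒜 is a U/L-wreath product with P ≤ L < G and U = CL
    (∃ L : Subgroup (Multiplicative (ZMod 3 × ZMod 3) × Multiplicative (ZMod p)),
      ((⊥ : Subgroup (Multiplicative (ZMod 3 × ZMod 3))).prod
        (⊤ : Subgroup (Multiplicative (ZMod p)))) ≤ L ∧ L ≠ ⊤ ∧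
      A.IsWreathSection (C ⊔ L) L) := by
  have hP : (Nat.card (Multiplicative (ZMod p))).Prime := by
    simpa using (Fact.out : p.Prime)
  have hNP : (Nat.card (Multiplicative (ZMod 3 × ZMod 3))).Coprime
      (Nat.card (Multiplicative (ZMod p))) := by
    have h3 : Nat.Coprime 3 p := (Nat.coprime_primes Nat.prime_three Fact.out).2 hp.ne
    simpa using h3.mul_left h3
  set L := sInf {H | A.IsASubgroup H ∧
    (⊥ : Subgroup (Multiplicative (ZMod 3 × ZMod 3))).prod
      (⊤ : Subgroup (Multiplicative (ZMod p))) ≤ H}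
  have hL : A.IsASubgroup L := SchurRing.isASubgroup_sInf fun H hH => hH.1
  have hPL : (⊥ : Subgroup (Multiplicative (ZMod 3 × ZMod 3))).prod
      (⊤ : Subgroup (Multiplicative (ZMod p))) ≤ L := le_sInf fun H hH => hH.2
  by_cases hLtop : L = ⊤
  · left
    have hgen : ∀ H, A.IsASubgroup H → (⊥ : Subgroup (Multiplicative (ZMod 3 × ZMod 3))).prod
        (⊤ : Subgroup (Multiplicative (ZMod p))) ≤ H → H = ⊤ := fun H hH hPH =>
      top_le_iff.1 (hLtop ▸ sInf_le ⟨hH, hPH⟩)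
    obtain ⟨a₀, ha₀⟩ : ∃ a, (a, (1 : Multiplicative (ZMod p))) ∉ C := by
      by_contra! h
      refine hA ?_
      convert hC
      refine le_antisymm ?_ hCle
      rintro ⟨a, v⟩ hv
      obtain rfl : v = 1 := by simpa [Subgroup.mem_prod] using hv
      exact h a
    have hcompl := SchurRing.compl_mem_basicSets hP hNP hC hCle hCmax hgen ha₀
    refine ⟨⟨hC, hC, le_rfl, inferInstance, fun X hX hXC g hg => ?_⟩, hcompl⟩
    obtain ⟨x, hxX, hxC⟩ := Set.not_subset.1 hXC
    obtain rfl := A.eq_of_mem hX hcompl hxX hxC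
    constructor
    · ext x
      simp [C.mul_mem_cancel_left (C.inv_mem hg)]
    · ext x
      simp [C.mul_mem_cancel_right (C.inv_mem hg)]
  · right
    refine ⟨L, hPL, hLtop, hC.sup hL, hL, le_sup_right, inferInstance, fun X hX hXU g hg => ?_⟩
    have hdisj : ∀ x ∈ X, x ∉ C ⊔ L := fun x hx hxU => hXU ((hC.sup hL).subset hX hx hxU)
    have hstab : g ∈ MulAction.stabilizer _ X := by
      refine (sInf_le ⟨SchurRing.isASubgroup_stabilizer hX, ?_⟩ : L ≤ _) hg
      refine SchurRing.prod_top_le_stabilizer fun a u hau =>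
        SchurRing.mk_mem_of_mem hX hP hNP hCmax hau fun ha => hdisj _ hau ?_
      have h1u : ((1, u) : _ × Multiplicative (ZMod p)) ∈ L :=
        hPL (Subgroup.mem_prod.2 ⟨Subgroup.one_mem _, Subgroup.mem_top _⟩)
      simpa using Subgroup.mul_mem_sup ha h1u
    have himage : (g * ·) '' X = X := MulAction.mem_stabilizer_iff.1 hstab
    refine ⟨himage, ?_⟩
    simpa only [mul_comm] using himage
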